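/- arXiv:2509.18931 — 2 statements merged into one kernel-verified Lean document; each statement's English description precedes it below -/
import Mathlib

section
/- Set r_k = ⌈(3/2)·log k⌉ and Z_{k,r} = Σ_{i ∈ {1,…,r}^k} exp(−Σ_{j ∈ P(i)} Δ(j)). There exists a random variable Z on the same probability space, distributed as a rate-1 exponential, such that Z_{k,r_k} → Z in probability as k → ∞. -/
open MeasureTheory Filter

/-- The rate-1 exponential distribution: density `e^{-z}` on `(0, ∞)`. -/
noncomputable def expMeasure : Measure ℝ :=
  ((volume : Measure ℝ).restrict (Set.Ioi 0)).withDensity fun z =>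
    ENNReal.ofReal (Real.exp (-z))

/-- A finite nonempty sequence of positive integers, encoded as (initial segment, last
entry). -/
abbrev SeqIdx := List ℕ+ × ℕ+

/-- `treeSum Δ k r = Z_{k,r} = Σ_{i ∈ {1,…,r}^k} exp(-Σ_{j ∈ P(i)} Δ(j))
= Σ_{i ∈ {1,…,r}^k} ∏_{ℓ=1}^{k} ∏_{j=1}^{i_ℓ} exp(-Δ(i_1,…,i_{ℓ-1},j))`,
where `i ∈ {1,…,r}^k` is encoded as `i : Fin k → Fin r` via `i_ℓ = (i ℓ) + 1`. -/
noncomputable def treeSum {Ω : Type*} (Δ : SeqIdx → Ω → ℝ) (k r : ℕ) (ω : Ω) : ℝ :=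
  ∑ i : Fin k → Fin r, ∏ ℓ : Fin k, ∏ j ∈ Finset.range ((i ℓ : ℕ) + 1),
    Real.exp (-(Δ ((List.ofFn fun m : Fin k => Nat.succPNat (i m)).take ℓ.val,
      Nat.succPNat j) ω))


open Topology
open ProbabilityTheory hiding expMeasure

namespace TreeAux

lemma E_integral {F : Type*} [NormedAddCommGroup F] [NormedSpace ℝ F] (f : ℝ → F) :
    ∫ x, f x ∂expMeasure = ∫ x in Set.Ioi (0:ℝ), Real.exp (-x) • f x := by
  unfold expMeasure
  rw [integral_withDensity_eq_integral_toReal_smul (by fun_prop) (by simp)]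
  simp [ENNReal.toReal_ofReal (Real.exp_nonneg _)]

lemma E_integrable {F : Type*} [NormedAddCommGroup F] [NormedSpace ℝ F] (f : ℝ → F) :
    Integrable f expMeasure ↔ IntegrableOn (fun x => Real.exp (-x) • f x) (Set.Ioi (0:ℝ)) := by
  unfold expMeasure
  rw [integrable_withDensity_iff_integrable_smul' (by fun_prop) (by simp)]
  simp [ENNReal.toReal_ofReal (Real.exp_nonneg _), IntegrableOn]

instance : IsProbabilityMeasure expMeasure := by
  constructor
  unfold expMeasure
  rw [withDensity_apply _ MeasurableSet.univ, Measure.restrict_univ,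
    ← ofReal_integral_eq_lintegral_ofReal (integrableOn_exp_neg_Ioi 0)
      (ae_of_all _ fun _ => (Real.exp_nonneg _)), integral_exp_neg_Ioi_zero]
  simp

lemma E_pow (n : ℕ) : Integrable (fun x : ℝ => x ^ n) expMeasure ∧
    ∫ x, x ^ n ∂expMeasure = (n.factorial : ℝ) := by
  have h1 := Real.GammaIntegral_convergent (s := n + 1) (by positivity)
  have h2 := Real.Gamma_eq_integral (s := n + 1) (by positivity)
  simp only [add_sub_cancel_right, Real.rpow_natCast] at h1 h2
  rw [E_integrable, E_integral]
  refine ⟨h1, ?_⟩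
  simp only [smul_eq_mul]
  rw [← h2, Real.Gamma_nat_eq_factorial]

lemma E_exp (n : ℕ) : Integrable (fun x : ℝ => Real.exp (-x) ^ n) expMeasure ∧
    ∫ x, Real.exp (-x) ^ n ∂expMeasure = 1 / (n + 1 : ℝ) := by
  have h : ∀ x : ℝ, Real.exp (-x) • Real.exp (-x) ^ n = Real.exp (-(n+1) * x) := by
    intro x
    rw [smul_eq_mul, ← pow_succ', ← Real.exp_nat_mul]
    push_cast; ring_nf
  have hn : -((n:ℝ) + 1) < 0 := by linarith [Nat.cast_nonneg (α := ℝ) n]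
  rw [E_integrable, E_integral]
  simp only [h]
  refine ⟨integrableOn_exp_mul_Ioi hn 0, ?_⟩
  rw [integral_exp_mul_Ioi hn]
  rw [mul_zero, Real.exp_zero, neg_div_neg_eq]

lemma E_charFun (t : ℝ) : ∫ x : ℝ, Complex.exp (t * x * Complex.I) ∂expMeasure
    = 1 / (1 - t * Complex.I) := by
  rw [E_integral]
  have h : ∀ x : ℝ, Real.exp (-x) • Complex.exp (t * x * Complex.I)
      = Complex.exp ((-1 + t * Complex.I) * x) := by
    intro x
    rw [Complex.real_smul, Complex.ofReal_exp, ← Complex.exp_add]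
    push_cast; ring_nf
  simp only [h]
  rw [integral_exp_mul_complex_Ioi (by simp)]
  simp only [Complex.ofReal_zero, mul_zero, Complex.exp_zero]
  rw [neg_div, ← div_neg]
  ring_nf

lemma ne0 (t : ℝ) : (1 - t * Complex.I) ≠ 0 := by
  intro h
  have := congrArg Complex.re h
  simp at this

lemma E_key (t : ℝ) : ∫ u : ℝ, (1 / (1 - (t * Real.exp (-u) : ℝ) * Complex.I)) ^ 2 ∂expMeasure
    = 1 / (1 - t * Complex.I) := by
  rw [E_integral]
  have hc : Continuous fun u : ℝ => (1 / (1 - (t * Real.exp (-u) : ℝ) * Complex.I)) := by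
    refine continuous_const.div (by fun_prop) fun u => ne0 _
  have hT : Tendsto (fun u : ℝ => Real.exp (-u)) atTop (𝓝 0) :=
    Real.tendsto_exp_neg_atTop_nhds_zero
  have := integral_Ioi_of_hasDerivAt_of_tendsto' (a := (0:ℝ)) (m := (0:ℂ))
    (f := fun u : ℝ => -((Real.exp (-u) : ℝ) : ℂ) / (1 - (t * Real.exp (-u) : ℝ) * Complex.I))
    (f' := fun u : ℝ => Real.exp (-u) • (1 / (1 - (t * Real.exp (-u) : ℝ) * Complex.I)) ^ 2)
    ?_ ?_ ?_
  · rw [this]; simp [neg_div]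
  · intro u _
    have h1 : HasDerivAt (fun u : ℝ => Real.exp (-u)) (-Real.exp (-u)) u := by
      simpa using (hasDerivAt_neg u).exp
    have h2 := h1.ofReal_comp
    have h3 := (h1.const_mul t).ofReal_comp
    have h4 := h2.neg.div ((h3.mul_const Complex.I).const_sub 1) (ne0 _)
    refine h4.congr_deriv ?_
    have := ne0 (t * Real.exp (-u))
    rw [Complex.real_smul]
    simp only [Pi.neg_apply]
    push_cast at this ⊢
    field_simp
    ring
  · refine Integrable.mono' (integrableOn_exp_neg_Ioi 0) ?_ (ae_of_all _ fun u => ?_)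
    · exact Continuous.aestronglyMeasurable (by fun_prop)
    · rw [norm_smul, Real.norm_eq_abs, abs_of_pos (Real.exp_pos _), norm_pow, norm_div, norm_one]
      refine mul_le_of_le_one_right (Real.exp_nonneg _) ?_
      apply pow_le_one₀ (by positivity)
      rw [div_le_one (norm_pos_iff.2 (ne0 _))]
      have := Complex.abs_re_le_norm (1 - (t * Real.exp (-u) : ℝ) * Complex.I)
      rw [Complex.sub_re, Complex.re_ofReal_mul] at this
      simpa only [Complex.I_re, mul_zero, sub_zero, Complex.one_re, abs_one] using this
  · have h1 : Tendsto (fun u : ℝ => ((Real.exp (-u) : ℝ) : ℂ)) atTop (𝓝 0) := by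
      have := (Complex.continuous_ofReal.tendsto 0).comp hT
      rw [Complex.ofReal_zero] at this
      exact this
    have h2 : Tendsto (fun u : ℝ => 1 - (t * Real.exp (-u) : ℝ) * Complex.I) atTop (𝓝 1) := by
      have : Tendsto (fun u : ℝ => 1 - (t * ((Real.exp (-u) : ℝ) : ℂ)) * Complex.I) atTop
        (𝓝 (1 - (t * 0) * Complex.I)) := ((h1.const_mul _).mul_const _).const_sub _
      simpa using this
    have := h1.neg.div h2 one_ne_zero
    rw [neg_zero, zero_div] at this
    exact this

lemma E_fix : Measure.map (fun q : ℝ × (ℝ × ℝ) => Real.exp (-q.1) * (q.2.1 + q.2.2))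
    (expMeasure.prod (expMeasure.prod expMeasure)) = expMeasure := by
  have hm : Measurable (fun q : ℝ × (ℝ × ℝ) => Real.exp (-q.1) * (q.2.1 + q.2.2)) := by fun_prop
  have := Measure.isProbabilityMeasure_map (μ := expMeasure.prod (expMeasure.prod expMeasure))
    hm.aemeasurable
  apply Measure.ext_of_charFun
  ext t
  rw [charFun_apply_real, charFun_apply_real, E_charFun, integral_map hm.aemeasurable
    (Continuous.aestronglyMeasurable (by fun_prop)), integral_prod]
  · rw [← E_key]
    congr 1
    ext u
    have : ∀ y : ℝ × ℝ, Complex.exp (t * ((Real.exp (-u) * (y.1 + y.2) : ℝ) : ℂ) * Complex.I)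
       = Complex.exp ((t * Real.exp (-u) : ℝ) * y.1 * Complex.I) *
         Complex.exp ((t * Real.exp (-u) : ℝ) * y.2 * Complex.I) := by
      intro y
      rw [← Complex.exp_add]; push_cast; ring_nf
    simp only [this]
    rw [integral_prod_mul (fun y : ℝ => Complex.exp ((t * Real.exp (-u) : ℝ) * y * Complex.I))
      (fun y : ℝ => Complex.exp ((t * Real.exp (-u) : ℝ) * y * Complex.I)), E_charFun]
    ring
  · refine Integrable.of_bound (C := 1) (Continuous.aestronglyMeasurable (by fun_prop))
      (ae_of_all _ fun q => ?_)
    rw [← Complex.ofReal_mul, Complex.norm_exp_ofReal_mul_I]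

abbrev X := SeqIdx → ℝ

def rootI : SeqIdx := ([], 1)
def childI (i : SeqIdx) : SeqIdx := (1 :: i.1, i.2)
def sibI : SeqIdx → SeqIdx
  | ([], s) => ([], s + 1)
  | (h :: t, s) => ((h + 1) :: t, s)

def child (x : X) : X := fun i => x (childI i)
def sib (x : X) : X := fun i => x (sibI i)

lemma childI_inj : Function.Injective childI := by
  rintro ⟨a, b⟩ ⟨c, d⟩ h
  simpa [childI] using h

lemma sibI_inj : Function.Injective sibI := by
  rintro ⟨a, b⟩ ⟨c, d⟩ h
  cases a <;> cases c <;> simp_all [sibI]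

lemma childI_ne_sibI (i j : SeqIdx) : childI i ≠ sibI j := by
  obtain ⟨a, b⟩ := i
  obtain ⟨c, d⟩ := j
  cases c with
  | nil => simp [childI, sibI]
  | cons h t =>
    simp only [childI, sibI, ne_eq, Prod.mk.injEq, List.cons.injEq, not_and]
    intro h1
    exact absurd h1.1 (PNat.lt_add_left 1 h).ne

lemma root_ne_childI (i : SeqIdx) : rootI ≠ childI i := by
  simp [rootI, childI]

lemma root_ne_sibI (i : SeqIdx) : rootI ≠ sibI i := by
  obtain ⟨c, d⟩ := i
  cases c with
  | nil =>
    simp only [rootI, sibI, ne_eq, Prod.mk.injEq, true_and]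
    exact (PNat.lt_add_left 1 d).ne
  | cons h t => simp [rootI, sibI]

@[fun_prop]
lemma measurable_child : Measurable child :=
  measurable_pi_iff.2 fun _ => measurable_pi_apply _

@[fun_prop]
lemma measurable_sib : Measurable sib :=
  measurable_pi_iff.2 fun _ => measurable_pi_apply _

noncomputable def P : Measure X := Measure.infinitePi fun _ => expMeasure

instance : IsProbabilityMeasure P := by unfold P; infer_instance

lemma map_child : P.map child = P :=
  Measure.map_infinitePi_infinitePi_of_inj (P := fun _ => expMeasure) childI_inj

lemma map_sib : P.map sib = P :=
  Measure.map_infinitePi_infinitePi_of_inj (P := fun _ => expMeasure) sibI_inj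

lemma map_root : P.map (fun x => x rootI) = expMeasure :=
  Measure.infinitePi_map_eval (fun _ => expMeasure) rootI

lemma indep_sets {S T : Set SeqIdx} (h : Disjoint S T) :
    Indep (⨆ i ∈ S, MeasurableSpace.comap (fun x : X => x i) inferInstance)
      (⨆ i ∈ T, MeasurableSpace.comap (fun x : X => x i) inferInstance) P := by
  refine indep_iSup_of_disjoint (fun i => (measurable_pi_apply i).comap_le) ?_ h
  have := iIndepFun_infinitePi (P := fun _ : SeqIdx => expMeasure) (X := fun _ x => x)
    (fun _ => measurable_id)
  exact this

lemma comap_reindex_le (f : SeqIdx → SeqIdx) (S : Set SeqIdx) (hS : ∀ i, f i ∈ S) :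
    MeasurableSpace.comap (fun (x : X) i => x (f i)) MeasurableSpace.pi ≤
    ⨆ i ∈ S, MeasurableSpace.comap (fun x : X => x i) inferInstance := by
  unfold MeasurableSpace.pi
  rw [MeasurableSpace.comap_iSup]
  refine iSup_le fun i => ?_
  rw [MeasurableSpace.comap_comp]
  exact le_iSup₂_of_le (f i) (hS i) le_rfl

lemma map_step : P.map (fun x => (x rootI, (child x, sib x))) =
    expMeasure.prod (P.prod P) := by
  have h1 : IndepFun child sib P := by
    have hd : Disjoint (Set.range childI) (Set.range sibI) := by
      rw [Set.disjoint_left]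
      rintro _ ⟨i, rfl⟩ ⟨j, hj⟩
      exact childI_ne_sibI i j hj.symm
    exact indep_of_indep_of_le_left (indep_of_indep_of_le_right (indep_sets hd)
      (comap_reindex_le sibI _ fun i => ⟨i, rfl⟩)) (comap_reindex_le childI _ fun i => ⟨i, rfl⟩)
  have h2 : IndepFun (fun x : X => x rootI) (fun x => (child x, sib x)) P := by
    have hd : Disjoint {rootI} (Set.range childI ∪ Set.range sibI) := by
      rw [Set.disjoint_left]
      rintro _ rfl (⟨j, hj⟩ | ⟨j, hj⟩)
      · exact root_ne_childI j hj.symm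
      · exact root_ne_sibI j hj.symm
    refine indep_of_indep_of_le_left (indep_of_indep_of_le_right (indep_sets hd) ?_) ?_
    · show MeasurableSpace.comap _ (MeasurableSpace.prod _ _) ≤ _
      unfold MeasurableSpace.prod
      rw [MeasurableSpace.comap_sup, MeasurableSpace.comap_comp, MeasurableSpace.comap_comp]
      exact sup_le (comap_reindex_le childI _ fun i => Or.inl ⟨i, rfl⟩)
        (comap_reindex_le sibI _ fun i => Or.inr ⟨i, rfl⟩)
    · exact le_iSup₂_of_le rootI rfl le_rfl
  rw [h2.map_prod_eq_prod_map_map (measurable_pi_apply _).aemeasurable (by fun_prop),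
    h1.map_prod_eq_prod_map_map (by fun_prop) (by fun_prop), map_child, map_sib, map_root]

lemma step_int {u : ℝ → ℝ} {b c : X → ℝ} (hu : Integrable u expMeasure)
    (hb : Integrable b P) (hc : Integrable c P) :
    Integrable (fun x => u (x rootI) * (b (child x) * c (sib x))) P ∧
    ∫ x, u (x rootI) * (b (child x) * c (sib x)) ∂P =
      (∫ z, u z ∂expMeasure) * ((∫ x, b x ∂P) * ∫ x, c x ∂P) := by
  have hi := hu.mul_prod (hb.mul_prod hc)
  have hm : Measurable (fun x : X => (x rootI, (child x, sib x))) := by fun_prop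
  rw [← map_step] at hi
  refine ⟨hi.comp_measurable hm, ?_⟩
  have h3 := integral_map hm.aemeasurable hi.aestronglyMeasurable
  rw [map_step] at h3
  rw [← integral_prod_mul b c, ← integral_prod_mul (L := ℝ) u (fun q : X × X => b q.1 * c q.2)]
  exact h3.symm

lemma int_child {b : X → ℝ} (hb : Integrable b P) :
    Integrable (fun x => b (child x)) P ∧ ∫ x, b (child x) ∂P = ∫ x, b x ∂P := by
  have := step_int (u := fun _ => 1) (c := fun _ => 1) (integrable_const _) hb (integrable_const _)
  simpa using this

/-! the branching operators -/

noncomputable def H : ℕ → (X → ℝ) → X → ℝ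
  | 0, g, x => g (child x)
  | n + 1, g, x => Real.exp (-x rootI) * (g (child x) + H n g (sib x))

noncomputable def HZ : ℕ → (X → ℝ) → X → ℝ
  | 0, _, _ => 0
  | n + 1, g, x => Real.exp (-x rootI) * (g (child x) + HZ n g (sib x))

lemma H_meas {g : X → ℝ} (hg : Measurable g) (n : ℕ) : Measurable (H n g) := by
  induction n with
  | zero => exact hg.comp measurable_child
  | succ n ih =>
    have h1 := hg.comp measurable_child
    have h2 := ih.comp measurable_sib
    have h3 : Measurable fun x : X => Real.exp (-x rootI) := by fun_prop
    exact h3.mul (h1.add h2)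

lemma HZ_meas {g : X → ℝ} (hg : Measurable g) (n : ℕ) : Measurable (HZ n g) := by
  induction n with
  | zero => exact measurable_const
  | succ n ih =>
    have h1 := hg.comp measurable_child
    have h2 := ih.comp measurable_sib
    have h3 : Measurable fun x : X => Real.exp (-x rootI) := by fun_prop
    exact h3.mul (h1.add h2)

lemma H_law {g : X → ℝ} (hg : Measurable g) (hl : P.map g = expMeasure) (n : ℕ) :
    P.map (H n g) = expMeasure := by
  induction n with
  | zero =>
    show P.map (g ∘ child) = _
    rw [← Measure.map_map hg measurable_child, map_child, hl]
  | succ n ih =>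
    have e : H (n+1) g = (fun q : ℝ × (ℝ × ℝ) => Real.exp (-q.1) * (q.2.1 + q.2.2)) ∘
        (Prod.map id (Prod.map g (H n g))) ∘ (fun x => (x rootI, (child x, sib x))) := rfl
    have hH := H_meas hg n
    rw [e, ← Measure.map_map (by fun_prop) (by fun_prop), ← Measure.map_map (by fun_prop)
      (by fun_prop), map_step, ← Measure.map_prod_map _ _ (by fun_prop) (by fun_prop),
      ← Measure.map_prod_map _ _ (by fun_prop) (by fun_prop), hl, ih, Measure.map_id, E_fix]

lemma lin_step {b c : X → ℝ} (hb : Integrable b P) (hc : Integrable c P) :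
    Integrable (fun x => Real.exp (-x rootI) * (b (child x) + c (sib x))) P ∧
    ∫ x, Real.exp (-x rootI) * (b (child x) + c (sib x)) ∂P =
      1 / 2 * (∫ x, b x ∂P + ∫ x, c x ∂P) := by
  have he := E_exp 1
  have h1 := step_int he.1 hb (integrable_const 1)
  have h2 := step_int he.1 (integrable_const 1) hc
  rw [he.2] at h1 h2
  simp only [pow_one, mul_one, one_mul, integral_const, probReal_univ, smul_eq_mul] at h1 h2
  simp only [mul_add]
  refine ⟨h1.1.add h2.1, ?_⟩
  rw [integral_add h1.1 h2.1, h1.2, h2.2]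
  norm_num

lemma sq_step {b c : X → ℝ} (hb : Integrable b P) (hc : Integrable c P)
    (hb2 : Integrable (fun x => b x ^ 2) P) (hc2 : Integrable (fun x => c x ^ 2) P)
    (hb0 : ∫ x, b x ∂P = 0) :
    Integrable (fun x => (Real.exp (-x rootI) * (b (child x) + c (sib x))) ^ 2) P ∧
    ∫ x, (Real.exp (-x rootI) * (b (child x) + c (sib x))) ^ 2 ∂P =
      1 / 3 * (∫ x, b x ^ 2 ∂P + ∫ x, c x ^ 2 ∂P) := by
  have he := E_exp 2
  have h1 := step_int he.1 hb2 (integrable_const 1)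
  have h2 := step_int he.1 (integrable_const 1) hc2
  have h3 := step_int he.1 hb hc
  rw [he.2] at h1 h2 h3
  rw [hb0, zero_mul, mul_zero] at h3
  simp only [mul_one, one_mul, integral_const, probReal_univ, smul_eq_mul] at h1 h2
  have e : ∀ x : X, (Real.exp (-x rootI) * (b (child x) + c (sib x))) ^ 2 =
    (Real.exp (-x rootI) ^ 2 * b (child x) ^ 2 + Real.exp (-x rootI) ^ 2 * c (sib x) ^ 2) +
      2 * (Real.exp (-x rootI) ^ 2 * (b (child x) * c (sib x))) := fun x => by ring
  simp only [e]
  refine ⟨(h1.1.add h2.1).add (h3.1.const_mul 2), ?_⟩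
  rw [integral_add (by exact h1.1.add h2.1) (h3.1.const_mul 2), integral_add h1.1 h2.1,
    integral_const_mul, h1.2, h2.2, h3.2]
  norm_num
  ring

lemma H_int {g : X → ℝ} (hg : Integrable g P) (n : ℕ) :
    Integrable (H n g) P ∧ ∫ x, H n g x ∂P = ∫ x, g x ∂P := by
  induction n with
  | zero => exact int_child hg
  | succ n ih =>
    have := lin_step hg ih.1
    refine ⟨this.1, this.2.trans ?_⟩
    rw [ih.2]; ring

lemma HZ_int {g : X → ℝ} (hg : Integrable g P) (n : ℕ) :
    Integrable (HZ n g) P ∧ ∫ x, HZ n g x ∂P = (1 - (1 / 2) ^ n) * ∫ x, g x ∂P := by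
  induction n with
  | zero => simp [HZ]
  | succ n ih =>
    have := lin_step hg ih.1
    refine ⟨this.1, this.2.trans ?_⟩
    rw [ih.2]; ring

noncomputable def a (n : ℕ) : ℝ := 1 / 2 + 1 / 2 * (1 / 3) ^ n

lemma H_sq {g : X → ℝ} (hg : Integrable g P) (hg2 : Integrable (fun x => g x ^ 2) P)
    (h0 : ∫ x, g x ∂P = 0) (n : ℕ) :
    Integrable (fun x => H n g x ^ 2) P ∧ ∫ x, H n g x ^ 2 ∂P = a n * ∫ x, g x ^ 2 ∂P := by
  induction n with
  | zero =>
    have := int_child hg2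
    refine ⟨this.1, this.2.trans ?_⟩
    norm_num [a]
  | succ n ih =>
    have := sq_step hg (H_int hg n).1 hg2 ih.1 h0
    refine ⟨this.1, this.2.trans ?_⟩
    rw [ih.2, a, a]; ring

lemma H_sub (g g' : X → ℝ) (n : ℕ) (x : X) :
    H n (fun x => g x - g' x) x = H n g x - H n g' x := by
  induction n generalizing x with
  | zero => rfl
  | succ n ih => simp only [H, ih]; ring

lemma HZ_nonneg {g : X → ℝ} (h : ∀ x, 0 ≤ g x) (n : ℕ) (x : X) : 0 ≤ HZ n g x := by
  induction n generalizing x with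
  | zero => exact le_rfl
  | succ n ih => exact mul_nonneg (Real.exp_nonneg _) (add_nonneg (h _) (ih _))

lemma HZ_le_H {g g' : X → ℝ} (h0 : ∀ x, 0 ≤ g x) (h : ∀ x, g x ≤ g' x) (n : ℕ) (x : X) :
    HZ n g x ≤ H n g' x := by
  induction n generalizing x with
  | zero => exact (h0 _).trans (h _)
  | succ n ih =>
    exact mul_le_mul_of_nonneg_left (add_le_add (h _) (ih _)) (Real.exp_nonneg _)

lemma HZ_mono {g g' : X → ℝ} (h0 : ∀ x, 0 ≤ g x) (h : ∀ x, g x ≤ g' x) {n n' : ℕ} (hn : n ≤ n')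
    (x : X) : HZ n g x ≤ HZ n' g' x := by
  induction n generalizing x n' with
  | zero => exact HZ_nonneg (fun x => (h0 x).trans (h x)) _ _
  | succ n ih =>
    obtain ⟨m, rfl⟩ : ∃ m, n' = m + 1 := ⟨n' - 1, by omega⟩
    exact mul_le_mul_of_nonneg_left (add_le_add (h _) (ih (by omega) _)) (Real.exp_nonneg _)

noncomputable def F (r k : ℕ) (L : X → ℝ) : X → ℝ := (H r)^[k] L
noncomputable def Zf (r k : ℕ) : X → ℝ := (HZ r)^[k] (fun _ => 1)

lemma F_succ (r k : ℕ) (L : X → ℝ) : F r (k+1) L = H r (F r k L) :=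
  Function.iterate_succ_apply' _ _ _
lemma Zf_succ (r k : ℕ) : Zf r (k+1) = HZ r (Zf r k) :=
  Function.iterate_succ_apply' _ _ _
lemma F_add (r k n : ℕ) (L : X → ℝ) : F r (k+n) L = F r k (F r n L) :=
  Function.iterate_add_apply _ _ _ _

lemma F_meas {L : X → ℝ} (h : Measurable L) (r k : ℕ) : Measurable (F r k L) := by
  induction k with
  | zero => exact h
  | succ k ih => rw [F_succ]; exact H_meas ih r

lemma Zf_meas (r k : ℕ) : Measurable (Zf r k) := by
  induction k with
  | zero => exact measurable_const
  | succ k ih => rw [Zf_succ]; exact HZ_meas ih r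

lemma F_law {L : X → ℝ} (h : Measurable L) (hl : P.map L = expMeasure) (r k : ℕ) :
    P.map (F r k L) = expMeasure := by
  induction k with
  | zero => exact hl
  | succ k ih => rw [F_succ]; exact H_law (F_meas h r k) ih r

lemma F_int {L : X → ℝ} (h : Integrable L P) (r k : ℕ) :
    Integrable (F r k L) P ∧ ∫ x, F r k L x ∂P = ∫ x, L x ∂P := by
  induction k with
  | zero => exact ⟨h, rfl⟩
  | succ k ih =>
    rw [F_succ]
    have := H_int ih.1 r
    exact ⟨this.1, this.2.trans ih.2⟩

lemma Zf_int (r k : ℕ) :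
    Integrable (Zf r k) P ∧ ∫ x, Zf r k x ∂P = (1 - (1 / 2) ^ r) ^ k := by
  induction k with
  | zero => exact ⟨integrable_const _, by simp [Zf]⟩
  | succ k ih =>
    rw [Zf_succ]
    have := HZ_int ih.1 r
    exact ⟨this.1, this.2.trans (by rw [ih.2]; ring)⟩

lemma F_sq {L : X → ℝ} (h : Integrable L P) (h2 : Integrable (fun x => L x ^ 2) P)
    (h0 : ∫ x, L x ∂P = 0) (r k : ℕ) :
    Integrable (fun x => F r k L x ^ 2) P ∧
    ∫ x, F r k L x ^ 2 ∂P = a r ^ k * ∫ x, L x ^ 2 ∂P := by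
  induction k with
  | zero => exact ⟨h2, by simp [F]⟩
  | succ k ih =>
    rw [F_succ]
    have hi := F_int h r k
    have := H_sq hi.1 ih.1 (hi.2.trans h0) r
    exact ⟨this.1, this.2.trans (by rw [ih.2]; ring)⟩

lemma F_sub (g g' : X → ℝ) (r k : ℕ) :
    F r k (fun x => g x - g' x) = fun x => F r k g x - F r k g' x := by
  induction k with
  | zero => rfl
  | succ k ih => ext x; rw [F_succ, F_succ, F_succ, ih, H_sub]

lemma Zf_nonneg (r k : ℕ) (x : X) : 0 ≤ Zf r k x := by
  induction k generalizing x with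
  | zero => exact zero_le_one
  | succ k ih => rw [Zf_succ]; exact HZ_nonneg ih _ _

lemma Zf_le_F (r k : ℕ) (x : X) : Zf r k x ≤ F r k (fun _ => 1) x := by
  induction k generalizing x with
  | zero => exact le_rfl
  | succ k ih => rw [Zf_succ, F_succ]; exact HZ_le_H (Zf_nonneg r k) ih _ _

lemma Zf_mono {r r' : ℕ} (h : r ≤ r') (k : ℕ) (x : X) : Zf r k x ≤ Zf r' k x := by
  induction k generalizing x with
  | zero => exact le_rfl
  | succ k ih => rw [Zf_succ, Zf_succ]; exact HZ_mono (Zf_nonneg r k) ih h _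

lemma bern (r k : ℕ) : 1 - (1 - (1 / 2 : ℝ) ^ r) ^ k ≤ k * (1 / 2) ^ r := by
  have h1 : (1 / 2 : ℝ) ^ r ≤ 1 := pow_le_one₀ (by norm_num) (by norm_num)
  have := one_add_mul_le_pow (a := -(1 / 2 : ℝ) ^ r) (by linarith) k
  rw [← sub_eq_add_neg (1:ℝ)] at this
  linarith

lemma d2 {r r' : ℕ} (h : r ≤ r') (k : ℕ) :
    ∫ x, |Zf r k x - Zf r' k x| ∂P ≤ k * (1 / 2) ^ r := by
  have e : ∀ x, |Zf r k x - Zf r' k x| = Zf r' k x - Zf r k x := fun x => by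
    rw [abs_of_nonpos (by linarith [Zf_mono h k x])]; ring
  simp only [e]
  rw [integral_sub (Zf_int r' k).1 (Zf_int r k).1, (Zf_int r' k).2, (Zf_int r k).2]
  refine le_trans ?_ (bern r k)
  have : (1 - (1 / 2 : ℝ) ^ r') ^ k ≤ 1 := by
    apply pow_le_one₀
    · have : (1 / 2 : ℝ) ^ r' ≤ 1 := pow_le_one₀ (by norm_num) (by norm_num)
      linarith
    · have : 0 < (1 / 2 : ℝ) ^ r' := by positivity
      linarith
  linarith

lemma d2' (r k : ℕ) :
    ∫ x, |F r k (fun _ => 1) x - Zf r k x| ∂P ≤ k * (1 / 2) ^ r := by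
  have e : ∀ x, |F r k (fun _ => 1) x - Zf r k x| = F r k (fun _ => 1) x - Zf r k x :=
    fun x => abs_of_nonneg (by linarith [Zf_le_F r k x])
  simp only [e]
  have := F_int (L := fun _ => 1) (integrable_const _) r k
  rw [integral_sub this.1 (Zf_int r k).1, this.2, (Zf_int r k).2]
  simpa using bern r k

lemma l1_le_l2 {f : X → ℝ} (h : Integrable f P) (h2 : Integrable (fun x => f x ^ 2) P) :
    ∫ x, |f x| ∂P ≤ Real.sqrt (∫ x, f x ^ 2 ∂P) := by
  apply Real.le_sqrt_of_sq_le
  set c := ∫ x, |f x| ∂P with hc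
  have h0 : 0 ≤ ∫ x, (|f x| - c) ^ 2 ∂P := integral_nonneg fun x => sq_nonneg _
  have e : ∀ x, (|f x| - c) ^ 2 = f x ^ 2 + ((-2 * c) * |f x| + c ^ 2) := fun x => by
    rw [sub_sq, sq_abs]; ring
  simp only [e] at h0
  have ha : Integrable (fun x => (-2 * c) * |f x|) P := h.abs.const_mul _
  rw [integral_add h2 (by exact ha.add (integrable_const _)),
    integral_add ha (integrable_const _), integral_const_mul, ← hc] at h0
  simp at h0
  nlinarith

noncomputable def Y0 : X → ℝ := fun x => x rootI

lemma Y0_meas : Measurable Y0 := measurable_pi_apply _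

lemma FY_mom (r k n : ℕ) : Integrable (fun x => F r k Y0 x ^ n) P ∧
    ∫ x, F r k Y0 x ^ n ∂P = n.factorial := by
  have hm := F_meas Y0_meas r k
  have hl := F_law Y0_meas map_root r k
  have he := E_pow n
  rw [← hl] at he
  refine ⟨he.1.comp_measurable hm, ?_⟩
  rw [← he.2, integral_map hm.aemeasurable he.1.aestronglyMeasurable]

lemma FY_int (r k : ℕ) : Integrable (F r k Y0) P := by
  simpa using (FY_mom r k 1).1

lemma d3 (r k n : ℕ) (hr : 1 ≤ r) :
    ∫ x, |F r (k + n) Y0 x - F r k (fun _ => 1) x| ∂P ≤ Real.sqrt ((2 / 3) ^ k) := by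
  have h1 := FY_mom r n 1
  have h2 := FY_mom r n 2
  simp only [pow_one] at h1
  have hi : Integrable (fun x => F r n Y0 x - 1) P := h1.1.sub (integrable_const _)
  have e : ∀ x, (F r n Y0 x - 1) ^ 2 = F r n Y0 x ^ 2 + ((-2) * F r n Y0 x + 1) :=
    fun x => by ring
  have hj : Integrable (fun x => (-2) * F r n Y0 x + 1) P :=
    (h1.1.const_mul _).add (integrable_const _)
  have hi2 : Integrable (fun x => (F r n Y0 x - 1) ^ 2) P := by
    simp only [e]; exact h2.1.add hj
  have hv : ∫ x, (F r n Y0 x - 1) ^ 2 ∂P = 1 := by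
    simp only [e]
    rw [integral_add h2.1 hj, integral_add (h1.1.const_mul _) (integrable_const _),
      integral_const_mul, h1.2, h2.2]
    norm_num
  have h0 : ∫ x, (F r n Y0 x - 1) ∂P = 0 := by
    rw [integral_sub h1.1 (integrable_const _), h1.2]; simp
  have hs := F_sq hi hi2 h0 r k
  have hI := (F_int hi r k).1
  have := l1_le_l2 hI hs.1
  rw [hs.2, hv, mul_one, F_sub, ← F_add] at this
  refine this.trans (Real.sqrt_le_sqrt ?_)
  have h3 : (1 / 3 : ℝ) ^ r ≤ 1 / 3 := pow_le_of_le_one (by norm_num) (by norm_num) (by omega)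
  have h4 : 0 < (1 / 3 : ℝ) ^ r := by positivity
  refine pow_le_pow_left₀ ?_ ?_ k <;> unfold a <;> linarith

lemma tri {f g h : X → ℝ} (hf : Integrable f P) (hg : Integrable g P) (hh : Integrable h P) :
    ∫ x, |f x - h x| ∂P ≤ ∫ x, |f x - g x| ∂P + ∫ x, |g x - h x| ∂P := by
  refine le_trans ?_ (integral_add (hf.sub hg).abs (hg.sub hh).abs).le
  exact integral_mono (hf.sub hh).abs ((hf.sub hg).abs.add (hg.sub hh).abs)
    fun x => abs_sub_le _ _ _

lemma d4 (r k n : ℕ) (hr : 1 ≤ r) :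
    ∫ x, |F r (k + n) Y0 x - Zf r k x| ∂P ≤ Real.sqrt ((2 / 3) ^ k) + k * (1 / 2) ^ r :=
  (tri (FY_int r (k+n)) (F_int (integrable_const 1) r k).1 (Zf_int r k).1).trans
    (add_le_add (d3 r k n hr) (d2' r k))

noncomputable def R (k : ℕ) : ℕ := ⌈(3 / 2 : ℝ) * Real.log k⌉₊

lemma R_mono {k m : ℕ} (hk : 1 ≤ k) (h : k ≤ m) : R k ≤ R m := by
  unfold R
  gcongr

lemma R_pos {k : ℕ} (hk : 2 ≤ k) : 1 ≤ R k := by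
  unfold R
  rw [Nat.one_le_ceil_iff]
  have : 0 < Real.log k := Real.log_pos (by exact_mod_cast hk)
  positivity

lemma eps_tendsto : Tendsto (fun k : ℕ => (k : ℝ) * (1 / 2) ^ (R k)) atTop (𝓝 0) := by
  have hl := Real.log_two_gt_d9
  have hT : Tendsto (fun k : ℕ => (k : ℝ) ^ (-(3 / 2 * Real.log 2 - 1))) atTop (𝓝 0) :=
    (tendsto_rpow_neg_atTop (by linarith)).comp tendsto_natCast_atTop_atTop
  refine squeeze_zero' (Eventually.of_forall fun k => by positivity) ?_ hT
  filter_upwards [eventually_ge_atTop 1] with k hk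
  have hk0 : (0:ℝ) < k := by exact_mod_cast hk
  have h1 : (1 / 2 : ℝ) ^ (R k) = Real.exp (-(R k * Real.log 2)) := by
    rw [Real.exp_neg, Real.exp_nat_mul, Real.exp_log (by norm_num)]; simp
  have h2 : (3 / 2 : ℝ) * Real.log k ≤ R k := Nat.le_ceil _
  rw [h1, Real.rpow_def_of_pos hk0]
  nth_rewrite 1 [← Real.exp_log hk0]
  rw [← Real.exp_add]
  apply Real.exp_le_exp.2
  nlinarith

lemma del_tendsto : Tendsto (fun k : ℕ => Real.sqrt ((2 / 3 : ℝ) ^ k)) atTop (𝓝 0) := by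
  have := (Real.continuous_sqrt.tendsto 0).comp
    (tendsto_pow_atTop_nhds_zero_of_lt_one (r := (2/3:ℝ)) (by norm_num) (by norm_num))
  rw [Real.sqrt_zero] at this
  exact this

noncomputable def W (k : ℕ) : X → ℝ := Zf (R k) k
noncomputable def Y (k : ℕ) : X → ℝ := F (R k) k Y0

lemma W_cauchy_bound {k m : ℕ} (hk : 2 ≤ k) (hm : k ≤ m) : ∫ x, |W k x - W m x| ∂P ≤
    ((k : ℝ) * (1 / 2) ^ (R k) + Real.sqrt ((2 / 3 : ℝ) ^ k)) +
    2 * ((m : ℝ) * (1 / 2) ^ (R m) + Real.sqrt ((2 / 3 : ℝ) ^ m)) := by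
  obtain ⟨n, rfl⟩ := Nat.exists_eq_add_of_le hm
  have h1 := d2 (R_mono (by omega) hm) k
  have h2 := d4 (R (k+n)) k n (R_pos (by omega))
  have h3 := d4 (R (k+n)) (k+n) 0 (R_pos (by omega))
  rw [add_zero] at h3
  have t1 := tri (Zf_int (R k) k).1 (Zf_int (R (k+n)) k).1 (Zf_int (R (k+n)) (k+n)).1
  have t2 := tri (Zf_int (R (k+n)) k).1 (FY_int (R (k+n)) (k+n)) (Zf_int (R (k+n)) (k+n)).1
  simp only [abs_sub_comm (Zf (R (k+n)) k _) (F _ _ _ _)] at t2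
  have h5 : (k:ℝ) * (1 / 2) ^ (R (k+n)) ≤ ((k+n : ℕ):ℝ) * (1 / 2) ^ (R (k+n)) := by
    gcongr
  have h6 := Real.sqrt_nonneg ((2 / 3 : ℝ) ^ (k+n))
  unfold W
  linarith

lemma YW_bound {k : ℕ} (hk : 2 ≤ k) : ∫ x, |Y k x - W k x| ∂P ≤
    Real.sqrt ((2 / 3 : ℝ) ^ k) + (k : ℝ) * (1 / 2) ^ (R k) := d4 (R k) k 0 (R_pos hk)

lemma W_int (k : ℕ) : Integrable (W k) P := (Zf_int _ _).1

lemma exists_lim : ∃ Z : X → ℝ, Measurable Z ∧ TendstoInMeasure P W atTop Z := by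
  have hb : Tendsto (fun k : ℕ => (k : ℝ) * (1 / 2) ^ (R k) + Real.sqrt ((2 / 3 : ℝ) ^ k))
    atTop (𝓝 0) := by simpa using eps_tendsto.add del_tendsto
  have hC : CauchySeq (fun k => (W_int k).toL1 (W k)) := by
    rw [Metric.cauchySeq_iff']
    intro ε hε
    obtain ⟨N, hN⟩ := eventually_atTop.1 ((hb.eventually (gt_mem_nhds (show 0 < ε / 3 by positivity))))
    refine ⟨max N 2, fun m hm => ?_⟩
    rw [dist_comm, L1.dist_eq_integral_dist]
    have h1 := W_cauchy_bound (le_max_right N 2) hm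
    have h2 := hN (max N 2) (le_max_left _ _)
    have h3 := hN m ((le_max_left _ _).trans hm)
    refine lt_of_eq_of_lt (integral_congr_ae ?_) (lt_of_le_of_lt h1 (by linarith))
    filter_upwards [(W_int m).coeFn_toL1, (W_int (max N 2)).coeFn_toL1] with x e1 e2
    rw [e1, e2, Real.dist_eq]
  obtain ⟨Z, hZ⟩ := cauchySeq_tendsto_of_complete hC
  refine ⟨Z, (Lp.stronglyMeasurable Z).measurable, ?_⟩
  exact (tendstoInMeasure_of_tendsto_Lp hZ).congr_left fun k => (W_int k).coeFn_toL1

lemma YW_meas : TendstoInMeasure P (Y - W) atTop 0 := by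
  have hi : ∀ k, Integrable (Y k - W k) P := fun k => (FY_int _ _).sub (W_int k)
  refine tendstoInMeasure_of_tendsto_eLpNorm (p := 1) one_ne_zero
    (fun k => (hi k).aestronglyMeasurable) aestronglyMeasurable_zero ?_
  have hb : Tendsto (fun k : ℕ => Real.sqrt ((2 / 3 : ℝ) ^ k) + (k : ℝ) * (1 / 2) ^ (R k))
    atTop (𝓝 0) := by simpa using del_tendsto.add eps_tendsto
  have hb' := ENNReal.tendsto_ofReal hb
  rw [ENNReal.ofReal_zero] at hb'
  refine tendsto_of_tendsto_of_tendsto_of_le_of_le' tendsto_const_nhds hb'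
    (Eventually.of_forall fun _ => zero_le) ?_
  filter_upwards [eventually_ge_atTop 2] with k hk
  rw [sub_zero, eLpNorm_one_eq_lintegral_enorm, Pi.sub_apply,
    ← ofReal_integral_norm_eq_lintegral_enorm (hi k)]
  exact ENNReal.ofReal_le_ofReal (YW_bound hk)

lemma Z_law {Z : X → ℝ} (h : TendstoInMeasure P W atTop Z) :
    P.map Z = expMeasure := by
  have hY : ∀ k, AEMeasurable (Y k) P := fun k => (F_meas Y0_meas _ _).aemeasurable
  have h1 := h.tendstoInDistribution (fun k => (Zf_meas _ _).aemeasurable)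
  have h2 := tendstoInDistribution_of_tendstoInMeasure_sub Y Z h1 YW_meas hY
  have hl : ∀ k, P.map (Y k) = expMeasure := fun k => F_law Y0_meas map_root _ _
  have h3 : TendstoInDistribution Y atTop (id : ℝ → ℝ) (fun _ => P) expMeasure :=
    tendstoInDistribution_of_identDistrib 0
      (fun j => ⟨hY 0, hY j, by rw [hl, hl]⟩) ⟨hY 0, aemeasurable_id, by rw [hl, Measure.map_id]⟩
  rw [tendstoInDistribution_unique Y h2 h3, Measure.map_id]

def subT (j : ℕ) (x : X) : X := fun i => x (Nat.succPNat j :: i.1, i.2)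

lemma subT_zero (x : X) : subT 0 x = child x := rfl

lemma subT_sib (j : ℕ) (x : X) : subT j (sib x) = subT (j+1) x := rfl

lemma HZ_eq (n : ℕ) (g : X → ℝ) (x : X) : HZ n g x = ∑ j : Fin n,
    (∏ j' ∈ Finset.range ((j : ℕ) + 1), Real.exp (-x ([], Nat.succPNat j'))) * g (subT j x) := by
  induction n generalizing x with
  | zero => rfl
  | succ n ih =>
    rw [HZ, ih, Fin.sum_univ_succ, mul_add, Finset.mul_sum]
    congr 1
    · simp only [Fin.val_zero, zero_add, Finset.prod_range_one, subT_zero]; rfl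
    · refine Finset.sum_congr rfl fun j _ => ?_
      rw [subT_sib, Fin.val_succ, Finset.prod_range_succ' _ ((j:ℕ)+1), ← mul_assoc]
      congr 1
      rw [mul_comm]
      rfl

lemma treeSum_eq (k r : ℕ) (x : X) : treeSum (fun i (x : X) => x i) k r x = Zf r k x := by
  induction k generalizing x with
  | zero => simp [treeSum, Zf]
  | succ k ih =>
    rw [Zf_succ, HZ_eq]
    unfold treeSum
    rw [← (Fin.consEquiv fun _ => Fin r).sum_comp, Fintype.sum_prod_type]
    refine Finset.sum_congr rfl fun j _ => ?_
    rw [← ih, treeSum, Finset.mul_sum]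
    refine Finset.sum_congr rfl fun i _ => ?_
    rw [Fin.prod_univ_succ]
    simp [Fin.consEquiv, List.ofFn_succ, subT]

end TreeAux

/-- With `r_k = ⌈(3/2) log k⌉`, the tree functionals `Z_{k, r_k}` converge in
probability (as `k → ∞`) to a rate-1 exponential random variable `Z` defined on the
same probability space. -/
theorem treeSum_tendsto_exponential {Ω : Type*} [MeasurableSpace Ω] (μ : Measure Ω)
    [IsProbabilityMeasure μ] (Δ : SeqIdx → Ω → ℝ)
    (hmeas : ∀ idx, Measurable (Δ idx))
    (hindep : ProbabilityTheory.iIndepFun Δ μ)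
    (hdist : ∀ idx, Measure.map (Δ idx) μ = expMeasure) :
    ∃ Z : Ω → ℝ, Measure.map Z μ = expMeasure ∧
      TendstoInMeasure μ
        (fun k : ℕ => treeSum Δ k (⌈(3 / 2 : ℝ) * Real.log k⌉₊)) atTop Z := by
  have hM : Measurable (fun ω i => Δ i ω) := measurable_pi_iff.2 hmeas
  have hP : μ.map (fun ω i => Δ i ω) = TreeAux.P := by
    rw [hindep.map_fun_eq_infinitePi_map hmeas]
    simp only [hdist, TreeAux.P]
  obtain ⟨Z, hZ, hT⟩ := TreeAux.exists_lim
  refine ⟨fun ω => Z (fun i => Δ i ω), ?_, ?_⟩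
  · rw [← TreeAux.Z_law hT, ← hP, Measure.map_map hZ hM]
    rfl
  · intro ε hε
    refine (hT ε hε).congr fun k => ?_
    rw [← hP, Measure.map_apply hM]
    · congr 1
      ext ω
      simp only [Set.mem_preimage, Set.mem_ofPred_eq, TreeAux.W, ← TreeAux.treeSum_eq]
      rfl
    · exact measurableSet_le measurable_const ((TreeAux.Zf_meas _ _).edist hZ)
end

section
/- Let Z, Z' be independent rate-1 exponential random variables and let X be a mixed Poisson random variable with random parameter Z·Z', i.e., P(X = x) = E[(Z·Z')^x e^{−Z·Z'} / x!] for x ∈ ℕ. Then X is heavy-tailed: for every t > 0, e^{t·x} · P(X > x) → ∞ as x → ∞ along the natural numbers. -/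
open MeasureTheory Filter

lemma inner_aux (x : ℕ) (z : ℝ) (hz : 0 < z) :
    ∫ z' in Set.Ioi (0:ℝ), ((z * z') ^ x / (x.factorial : ℝ)) * Real.exp (-(z * z'))
            * Real.exp (-z) * Real.exp (-z') = (z / (1 + z)) ^ x * (1 / (1 + z)) * Real.exp (-z) := by
  have h := Real.integral_rpow_mul_exp_neg_mul_Ioi (a := (x:ℝ) + 1) (r := 1 + z)
    (by positivity) (by positivity)
  have h2 : ∀ z' : ℝ, ((z * z') ^ x / (x.factorial : ℝ)) * Real.exp (-(z * z'))
            * Real.exp (-z) * Real.exp (-z') = (z ^ x / (x.factorial : ℝ) * Real.exp (-z)) *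
            (z' ^ ((x:ℝ) + 1 - 1) * Real.exp (-((1 + z) * z'))) := by
    intro z'
    have : Real.exp (-((1 + z) * z')) = Real.exp (-(z * z')) * Real.exp (-z') := by
      rw [← Real.exp_add]; ring_nf
    rw [this, add_sub_cancel_right, Real.rpow_natCast, mul_pow]
    ring
  simp_rw [h2]
  rw [integral_const_mul, h, Real.Gamma_nat_eq_factorial]
  have h3 : (1 / (1 + z)) ^ ((x:ℝ) + 1) = (1 / (1 + z)) ^ (x + 1) := by
    rw [← Real.rpow_natCast]; push_cast; rfl
  rw [h3, pow_succ, div_pow, div_pow, one_pow]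
  have : (x.factorial : ℝ) ≠ 0 := by positivity
  have : 1 + z ≠ 0 := by positivity
  field_simp

lemma lower_aux (x : ℕ) (a : ℝ) (ha : 0 < a) :
    (a / (1 + a)) ^ x * (1 / (2 + a) * Real.exp (-(a + 1))) ≤
    ∫ z in Set.Ioi (0:ℝ), ∫ z' in Set.Ioi (0:ℝ),
          ((z * z') ^ x / (x.factorial : ℝ)) * Real.exp (-(z * z'))
            * Real.exp (-z) * Real.exp (-z') := by
  rw [setIntegral_congr_fun measurableSet_Ioi (fun z hz => inner_aux x z hz)]
  have hint : IntegrableOn (fun z : ℝ => (z / (1 + z)) ^ x * (1 / (1 + z)) * Real.exp (-z))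
      (Set.Ioi 0) := by
    refine Integrable.mono' (integrableOn_exp_neg_Ioi 0) ?_ ?_
    · exact Measurable.aestronglyMeasurable (by fun_prop)
    · refine (ae_restrict_iff' measurableSet_Ioi).2 (ae_of_all _ fun z hz => ?_)
      have hz : 0 < z := hz
      rw [Real.norm_of_nonneg (by positivity)]
      have h1 : (z / (1 + z)) ^ x ≤ 1 :=
        pow_le_one₀ (by positivity) ((div_le_one (by positivity)).2 (by linarith))
      have h2 : 1 / (1 + z) ≤ 1 := (div_le_one (by positivity)).2 (by linarith)
      have h3 := mul_le_one₀ h1 (by positivity) h2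
      exact mul_le_of_le_one_left (by positivity) h3
  have hsub : Set.Ioc a (a + 1) ⊆ Set.Ioi (0:ℝ) := fun z hz => lt_trans ha hz.1
  have hA := setIntegral_mono_set hint
    ((ae_restrict_iff' measurableSet_Ioi).2 (ae_of_all _ fun z (hz : 0 < z) => by
      simp only [Pi.zero_apply]; positivity)) (HasSubset.Subset.eventuallyLE hsub)
  refine le_trans ?_ hA
  have hB := setIntegral_mono_on (μ := volume) (s := Set.Ioc a (a + 1))
    (f := fun _ => (a / (1 + a)) ^ x * (1 / (2 + a) * Real.exp (-(a + 1))))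
    (integrableOn_const (by simp)) (hint.mono_set hsub) measurableSet_Ioc (fun z hz => by
      have hz1 := hz.1
      have hz2 := hz.2
      have hz0 : 0 < z := lt_trans ha hz1
      rw [← mul_assoc]
      have : a / (1 + a) ≤ z / (1 + z) := by
        rw [div_le_div_iff₀ (by positivity) (by positivity)]; nlinarith
      have : 1 / (2 + a) ≤ 1 / (1 + z) :=
        one_div_le_one_div_of_le (by positivity) (by linarith)
      have : Real.exp (-(a + 1)) ≤ Real.exp (-z) := Real.exp_le_exp.2 (by linarith)
      gcongr)
  simpa using hB

/-- A mixed Poisson random variable with parameter `Z·Z'`, for `Z, Z'` independent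
rate-1 exponentials, is heavy-tailed: `e^{t x} P(X > x) → ∞` for every `t > 0`. -/
theorem mixedPoisson_heavyTailed {Ω : Type*} [MeasurableSpace Ω] (μ : Measure Ω)
    [IsProbabilityMeasure μ] (X : Ω → ℕ)
    (hdist : ∀ x : ℕ, (μ {ω | X ω = x}).toReal
      = ∫ z in Set.Ioi (0:ℝ), ∫ z' in Set.Ioi (0:ℝ),
          ((z * z') ^ x / (x.factorial : ℝ)) * Real.exp (-(z * z'))
            * Real.exp (-z) * Real.exp (-z')) :
    ∀ t : ℝ, 0 < t →
      Tendsto (fun x : ℕ => Real.exp (t * x) * (μ {ω | x < X ω}).toReal)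
        atTop atTop := by
  intro t ht
  set a : ℝ := 2 / t with ha_def
  have ha : 0 < a := by positivity
  have hat : a * t = 2 := by rw [ha_def]; field_simp
  set r : ℝ := Real.exp t * (a / (1 + a)) with hr
  have hr1 : 1 < r := by
    rw [hr, ← mul_div_assoc, one_lt_div (by positivity)]
    have := Real.add_one_le_exp t
    nlinarith
  set c : ℝ := (a / (1 + a)) * (1 / (2 + a) * Real.exp (-(a + 1))) with hc
  have hc0 : 0 < c := by positivity
  refine tendsto_atTop_mono (fun x => ?_)
    ((tendsto_pow_atTop_atTop_of_one_lt hr1).atTop_mul_const hc0)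
  have h1 := lower_aux (x + 1) a ha
  rw [← hdist (x + 1)] at h1
  have h2 : (μ {ω | X ω = x + 1}).toReal ≤ (μ {ω | x < X ω}).toReal := by
    refine ENNReal.toReal_mono (measure_ne_top _ _) (measure_mono fun ω hω => ?_)
    simp only [Set.mem_setOf_eq] at hω ⊢
    omega
  have h3 := mul_le_mul_of_nonneg_left (h1.trans h2) (Real.exp_pos (t * x)).le
  refine le_of_eq_of_le ?_ h3
  rw [hr, hc, mul_pow, ← Real.exp_nat_mul, mul_comm (x:ℝ) t]
  ring
end
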